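/- A right R-module M is polyform if and only if its rational hull Ẽ(M) is a polyform quasi-injective module. -/

import Mathlib

/- Right `R`-modules are rendered as left `R`-modules (i.e. we work over the
opposite ring), so "`x·r`" becomes "`r • x`". -/

/-- `A` is a dense submodule of `B` (for submodules `A ≤ B` of an ambient
module `E`). -/
def DenseIn (R : Type*) [Ring R] {E : Type*} [AddCommGroup E] [Module R E]
    (A B : Submodule R E) : Prop :=
  ∀ x ∈ B, ∀ y ∈ B, y ≠ (0 : E) → ∃ r : R, r • x ∈ A ∧ r • y ≠ 0

/-- `A` is an essential submodule of `B` (inside the ambient module `E`). -/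
def EssentialIn (R : Type*) [Ring R] {E : Type*} [AddCommGroup E] [Module R E]
    (A B : Submodule R E) : Prop :=
  ∀ P : Submodule R E, P ≤ B → P ⊓ A = ⊥ → P = ⊥

/-- `B` is polyform: every essential submodule of `B` is dense in `B`. -/
def PolyformIn (R : Type*) [Ring R] {E : Type*} [AddCommGroup E] [Module R E]
    (B : Submodule R E) : Prop :=
  ∀ A : Submodule R E, A ≤ B → EssentialIn R A B → DenseIn R A B

/-- The rational hull of `M` computed inside `E`. -/
def ratHull (R : Type*) [Ring R] (E : Type*) [AddCommGroup E] [Module R E]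
    (M : Submodule R E) : Submodule R E where
  carrier := {x | ∀ ϑ : E →ₗ[R] E, (∀ m ∈ M, ϑ m = 0) → ϑ x = 0}
  add_mem' := by
    intro a b ha hb ϑ h
    simp only [Set.mem_setOf_eq] at *
    rw [map_add, ha ϑ h, hb ϑ h, add_zero]
  zero_mem' := by
    intro ϑ _
    exact map_zero ϑ
  smul_mem' := by
    intro r x hx ϑ h
    simp only [Set.mem_setOf_eq] at *
    rw [map_smul, hx ϑ h, smul_zero]

theorem ext_graph {R : Type*} [Ring R] {E : Type*} [AddCommGroup E] [Module R E]
    (hE : Module.Injective R E) (G : Submodule R (E × E))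
    (hG : ∀ y : E, ((0 : E), y) ∈ G → y = 0) :
    ∃ ϑ : E →ₗ[R] E, ∀ a b : E, (a, b) ∈ G → ϑ a = b := by
  obtain ⟨h, hh⟩ := hE.out ((LinearMap.fst R E E).comp G.subtype) (by
      rw [injective_iff_map_eq_zero]
      rintro ⟨⟨a, b⟩, hab⟩ h0
      have ha : a = 0 := h0
      subst ha
      have hb := hG b hab
      subst hb
      rfl) ((LinearMap.snd R E E).comp G.subtype)
  exact ⟨h, fun a b hab => hh ⟨(a, b), hab⟩⟩

theorem le_ratHull {R : Type*} [Ring R] {E : Type*} [AddCommGroup E] [Module R E]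
    (M : Submodule R E) : M ≤ ratHull R E M :=
  fun x hx _ h => h x hx

theorem ratHull_dense {R : Type*} [Ring R] {E : Type*} [AddCommGroup E] [Module R E]
    (M : Submodule R E) (hE : Module.Injective R E) (x : E) (hx : x ∈ ratHull R E M)
    (y : E) (hy : y ≠ 0) : ∃ r : R, r • x ∈ M ∧ r • y ≠ 0 := by
  by_contra! hcon
  obtain ⟨ϑ, hϑ⟩ := ext_graph hE (M.prod ⊥ ⊔ Submodule.span R {(x, y)}) (by
    intro z hz
    obtain ⟨⟨m, n⟩, hm, w, hw, hmw⟩ := Submodule.mem_sup.1 hz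
    obtain ⟨r, rfl⟩ := Submodule.mem_span_singleton.1 hw
    obtain ⟨hm1, hn⟩ := Submodule.mem_prod.1 hm
    have hn0 : n = 0 := hn
    have h1 : m + r • x = 0 := congrArg Prod.fst hmw
    have h2 : n + r • y = z := congrArg Prod.snd hmw
    have h3 : r • x ∈ M := by
      rw [eq_neg_of_add_eq_zero_right h1]
      exact M.neg_mem hm1
    rw [← h2, hn0, hcon r h3, add_zero])
  apply hy
  rw [← hϑ x y (Submodule.mem_sup_right (Submodule.mem_span_singleton_self _))]
  exact hx ϑ fun m hm => hϑ m 0 (Submodule.mem_sup_left ⟨hm, rfl⟩)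

theorem ess_elt {R : Type*} [Ring R] {E : Type*} [AddCommGroup E] [Module R E]
    (M : Submodule R E) (hess : ∀ N : Submodule R E, N ⊓ M = ⊥ → N = ⊥)
    (y : E) (hy : y ≠ 0) : ∃ r : R, r • y ∈ M ∧ r • y ≠ 0 := by
  by_contra! hcon
  apply hy
  have := hess (Submodule.span R {y}) (by
    rw [eq_bot_iff]
    rintro z ⟨hz, hzM⟩
    obtain ⟨r, rfl⟩ := Submodule.mem_span_singleton.1 hz
    exact hcon r hzM)
  exact Submodule.span_singleton_eq_bot.1 this

/-- Reduction: an essential submodule of a polyform `M` absorbs elements of the rational hull. -/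
theorem polyform_key {R : Type*} [Ring R] {E : Type*} [AddCommGroup E] [Module R E]
    (M : Submodule R E) (hE : Module.Injective R E)
    (hess : ∀ N : Submodule R E, N ⊓ M = ⊥ → N = ⊥) (hM : PolyformIn R M)
    (A : Submodule R E) (hA : A ≤ M) (hAe : EssentialIn R A M)
    (x : E) (hx : x ∈ ratHull R E M) (y : E) (hy : y ≠ 0) :
    ∃ r : R, r • x ∈ A ∧ r • y ≠ 0 := by
  obtain ⟨r, hr, hry⟩ := ratHull_dense M hE x hx y hy
  obtain ⟨s, hs, hsy⟩ := ess_elt M hess _ hry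
  obtain ⟨t, ht, hty⟩ := hM A hA hAe (s • r • x) (M.smul_mem s hr) _ hs hsy
  exact ⟨t * s * r, by simpa only [mul_smul] using ht, by simpa only [mul_smul] using hty⟩

/-- Let `E` be an injective hull of `M ≤ E` (then `E` is also
an injective hull of `Ẽ(M)`). Then `M` is polyform iff `Ẽ(M)` is a polyform
quasi-injective module. -/
theorem stmt18 (R : Type*) [Ring R] (E : Type*) [AddCommGroup E] [Module R E]
    (M : Submodule R E) (hE : Module.Injective R E)
    (hess : ∀ N : Submodule R E, N ⊓ M = ⊥ → N = ⊥) :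
    PolyformIn R M ↔
      (PolyformIn R (ratHull R E M) ∧
        ∀ ϑ : E →ₗ[R] E, ∀ x ∈ ratHull R E M, ϑ x ∈ ratHull R E M) := by
  constructor
  · intro hM
    refine ⟨?_, ?_⟩
    · intro A hA hAe x hx y _ hy
      obtain ⟨r, hr, hry⟩ := polyform_key M hE hess hM (A ⊓ M) inf_le_right (by
        intro P hP hPA
        refine hAe P (hP.trans (le_ratHull M)) ?_
        rw [eq_bot_iff, ← hPA]
        exact fun z hz => ⟨hz.1, hz.2, hP hz.1⟩) x hx y hy
      exact ⟨r, hr.1, hry⟩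
    · intro ϑ x hx ψ hψ
      by_contra hne
      obtain ⟨r, hr, hry⟩ := polyform_key M hE hess hM (M ⊓ M.comap ϑ) inf_le_left (by
        intro P hP hPA
        rw [eq_bot_iff]
        intro p hp
        by_contra hp0
        have key : ∀ r : R, r • ϑ p ∈ M → r • p = 0 := by
          intro r hr
          have : r • p ∈ P ⊓ (M ⊓ M.comap ϑ) :=
            ⟨P.smul_mem r hp, hP (P.smul_mem r hp), by
              simpa only [SetLike.mem_coe, Submodule.mem_comap, map_smul] using hr⟩
          rw [hPA] at this
          exact this
        by_cases h0 : ϑ p = 0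
        · exact hp0 (by simpa using key 1 (by simp [h0]))
        · obtain ⟨r, hr, hr0⟩ := ess_elt M hess _ h0
          exact hr0 (by rw [← map_smul, key r hr, map_zero])) x hx _ hne
      apply hry
      rw [← map_smul, ← map_smul]
      exact hψ _ hr.2
  · rintro ⟨hH, -⟩ A hA hAe x hx y hy hy0
    refine hH A (hA.trans (le_ratHull M)) ?_ x (le_ratHull M hx) y (le_ratHull M hy) hy0
    intro P _ hPA
    refine hess P (hAe (P ⊓ M) inf_le_right ?_)
    rw [eq_bot_iff, ← hPA]
    exact fun z hz => ⟨hz.1.1, hz.2⟩
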